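/- arXiv:1811.03769 — 4 statements merged into one kernel-verified Lean document; each statement's English description precedes it below -/
import Mathlib

section
/- Let d ∈ ℕ, s > d and c₀ > 0. There exists β > 0, depending only on d, s and c₀, such that whenever E ⊆ ℝ^{d+1}, x ∈ ℝ^{d+1} and r > 0 satisfy H^s_∞(E ∩ B(x,r)) ≥ c₀·r^s, one has bβ_E(x,r) ≥ β. -/
open MeasureTheory Metric Filter
open scoped ENNReal NNReal

noncomputable section

/-- `bbeta d E x r` is the quantity `bβ_E(x,r)`: the infimum over all `d`-dimensional
affine planes `V ⊆ ℝ^{d+1}` of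
`sup_{y ∈ E ∩ B(x,r)} dist(y,V)/r + sup_{y ∈ V ∩ B(x,r)} dist(y,E)/r`,
where suprema over empty sets are `0` (which is `Real.sSup`'s junk value). -/
def bbeta (d : ℕ) (E : Set (EuclideanSpace ℝ (Fin (d+1))))
    (x : EuclideanSpace ℝ (Fin (d+1))) (r : ℝ) : ℝ :=
  sInf { t : ℝ | ∃ V : AffineSubspace ℝ (EuclideanSpace ℝ (Fin (d+1))),
    (V : Set (EuclideanSpace ℝ (Fin (d+1)))).Nonempty ∧
    Module.finrank ℝ V.direction = d ∧
    t = sSup ((fun y => infDist y (V : Set (EuclideanSpace ℝ (Fin (d+1))))) ''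
          (E ∩ closedBall x r)) / r
      + sSup ((fun y => infDist y E) ''
          ((V : Set (EuclideanSpace ℝ (Fin (d+1)))) ∩ closedBall x r)) / r }

/-- `FDist μ ν B = sup_f |∫ f dμ − ∫ f dν|`, the supremum over all nonnegative
1-Lipschitz functions `f` supported in `B`. -/
def FDist {n : ℕ} (μ ν : Measure (EuclideanSpace ℝ (Fin n)))
    (B : Set (EuclideanSpace ℝ (Fin n))) : ℝ :=
  sSup { t : ℝ | ∃ f : EuclideanSpace ℝ (Fin n) → ℝ,
    LipschitzWith 1 f ∧ (∀ x, 0 ≤ f x) ∧ Function.support f ⊆ B ∧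
    t = |(∫ x, f x ∂μ) - ∫ x, f x ∂ν| }

/-- `alphaV d μ x r V = r^{-d-1} · inf_{c>0} F_{B(x,r)}(μ, c·H^d|_V)`. -/
def alphaV (d : ℕ) {n : ℕ} (μ : Measure (EuclideanSpace ℝ (Fin n)))
    (x : EuclideanSpace ℝ (Fin n)) (r : ℝ)
    (V : AffineSubspace ℝ (EuclideanSpace ℝ (Fin n))) : ℝ :=
  r ^ (-(d : ℝ) - 1) *
    sInf { t : ℝ | ∃ c : ℝ, 0 < c ∧
      t = FDist μ (ENNReal.ofReal c •
            (μH[(d : ℝ)]).restrict (V : Set (EuclideanSpace ℝ (Fin n))))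
          (closedBall x r) }

/-- `alphaA d μ x r = inf_V alphaV d μ x r V` over all `d`-dimensional affine planes `V`. -/
def alphaA (d : ℕ) {n : ℕ} (μ : Measure (EuclideanSpace ℝ (Fin n)))
    (x : EuclideanSpace ℝ (Fin n)) (r : ℝ) : ℝ :=
  sInf { t : ℝ | ∃ V : AffineSubspace ℝ (EuclideanSpace ℝ (Fin n)),
    (V : Set (EuclideanSpace ℝ (Fin n))).Nonempty ∧
    Module.finrank ℝ V.direction = d ∧ t = alphaV d μ x r V }

/-- `E` is Ahlfors `s`-regular with constant `C₁`:
`C₁⁻¹ r^s ≤ H^s(E ∩ B(x,r)) ≤ C₁ r^s` for all `x ∈ E` and `0 < r < diam E`. -/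
def AhlforsRegular {n : ℕ} (s C₁ : ℝ) (E : Set (EuclideanSpace ℝ (Fin n))) : Prop :=
  ∀ x ∈ E, ∀ r : ℝ, 0 < r → ENNReal.ofReal r < EMetric.diam E →
    ENNReal.ofReal (C₁⁻¹ * r ^ s) ≤ μH[s] (E ∩ closedBall x r) ∧
    μH[s] (E ∩ closedBall x r) ≤ ENNReal.ofReal (C₁ * r ^ s)

/-- The `t`-dimensional Hausdorff content `H^t_∞(A)`: the infimum of `∑ (diam U_i)^t`
over countable covers of `A` by arbitrary sets. -/
def hContent {n : ℕ} (t : ℝ) (A : Set (EuclideanSpace ℝ (Fin n))) : ℝ≥0∞ :=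
  ⨅ (U : ℕ → Set (EuclideanSpace ℝ (Fin n))) (_ : A ⊆ ⋃ i, U i),
    ∑' i, EMetric.diam (U i) ^ t

/-- `F ⊆ ℝ^n` is `d`-rectifiable: `H^d(F) < ∞` and `F` can be covered, up to an
`H^d`-null set, by countably many Lipschitz images of `ℝ^d`. -/
def DRectifiable (d : ℕ) {n : ℕ} (F : Set (EuclideanSpace ℝ (Fin n))) : Prop :=
  μH[(d : ℝ)] F < ⊤ ∧
  ∃ f : ℕ → (EuclideanSpace ℝ (Fin d) → EuclideanSpace ℝ (Fin n)),
    (∀ i, ∃ K : ℝ≥0, LipschitzWith K (f i)) ∧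
    μH[(d : ℝ)] (F \ ⋃ i, Set.range (f i)) = 0

end

open MeasureTheory Metric Filter
open scoped ENNReal

/-!
Suppose `E ∩ B(x,r)` lies in the `βr`-neighbourhood of a `d`-plane `V`. Its orthogonal projection to
`V` lies in a ball of radius `r`, which by comparing volumes is covered by `(1 + 2/β) ^ d` balls of
radius `βr`; doubling the radii gives a cover of `E ∩ B(x,r)`. Hence
`H^s_∞(E ∩ B(x,r)) ≤ (1 + 2/β) ^ d (4βr) ^ s = (β + 2) ^ d 4 ^ s β ^ (s - d) r ^ s`, which is
smaller than `c₀ r ^ s` once `β` is small, because `s > d`.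
-/

open Module (finrank)
open scoped Topology

section Packing

variable {E : Type*} [NormedAddCommGroup E] [NormedSpace ℝ E] [FiniteDimensional ℝ E]

theorem encard_le_of_isSeparated_of_subset_closedBall {C : Set E} {x : E} {R : ℝ} {ε : ℝ≥0}
    (hR : 0 ≤ R) (hε : 0 < ε) (hsep : IsSeparated ε C) (hC : C ⊆ closedBall x R) :
    (C.encard : ℝ≥0∞) ≤ ENNReal.ofReal ((1 + 2 * R / ε) ^ finrank ℝ E) := by
  borelize E
  let μ : Measure E := Measure.addHaar
  have hdisj : Pairwise (Function.onFun Disjoint fun c : C ↦ ball (c : E) (ε / 2)) := by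
    intro a b hab
    refine ball_disjoint_ball ?_
    have hlt : (ε : ℝ≥0∞) < edist (a : E) b := hsep a.2 b.2 (Subtype.coe_ne_coe.2 hab)
    rw [add_halves, dist_nndist]
    rw [edist_nndist] at hlt
    exact_mod_cast hlt.le
  have hvol : (C.encard : ℝ≥0∞) * μ (ball 0 (ε / 2)) ≤
      ENNReal.ofReal ((1 + 2 * R / ε) ^ finrank ℝ E) * μ (ball 0 (ε / 2)) :=
    calc (C.encard : ℝ≥0∞) * μ (ball 0 (ε / 2))
        = ∑' c : C, μ (ball (c : E) (ε / 2)) := by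
          simp only [μ.addHaar_ball_center _ (ε / 2 : ℝ), ENNReal.tsum_const]
          rfl
      _ ≤ μ (⋃ c : C, ball (c : E) (ε / 2)) :=
          tsum_meas_le_meas_iUnion_of_disjoint μ (fun _ ↦ measurableSet_ball) hdisj
      _ ≤ μ (ball x ((1 + 2 * R / ε) * (ε / 2))) := by
          refine measure_mono (Set.iUnion_subset fun c ↦ ball_subset_ball' ?_)
          calc (ε / 2 : ℝ) + dist (c : E) x ≤ ε / 2 + R := by
                gcongr
                exact hC c.2
            _ = (1 + 2 * R / ε) * (ε / 2) := by field_simp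
      _ = ENNReal.ofReal ((1 + 2 * R / ε) ^ finrank ℝ E) * μ (ball 0 (ε / 2)) :=
          μ.addHaar_ball_mul_of_pos x (by positivity) _
  exact (ENNReal.mul_le_mul_iff_left (measure_ball_pos μ 0 (by positivity)).ne'
    measure_ball_lt_top.ne).1 hvol

theorem coveringNumber_closedBall_le (x : E) {R : ℝ} {ε : ℝ≥0} (hR : 0 ≤ R) (hε : 0 < ε) :
    (coveringNumber ε (closedBall x R) : ℝ≥0∞) ≤
      ENNReal.ofReal ((1 + 2 * R / ε) ^ finrank ℝ E) := by
  calc (coveringNumber ε (closedBall x R) : ℝ≥0∞)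
      ≤ packingNumber ε (closedBall x R) := by
        exact_mod_cast coveringNumber_le_packingNumber ε (closedBall x R)
    _ ≤ ENNReal.ofReal ((1 + 2 * R / ε) ^ finrank ℝ E) := by
        simp only [packingNumber, ENat.toENNReal_iSup, iSup_le_iff]
        exact fun C hC hsep ↦ encard_le_of_isSeparated_of_subset_closedBall hR hε hsep hC

end Packing

section AffineSubspace

variable {E P : Type*} [NormedAddCommGroup E] [InnerProductSpace ℝ E] [MetricSpace P]
  [NormedAddTorsor E P] {V : AffineSubspace ℝ P}

theorem coveringNumber_inter_closedBall_le [FiniteDimensional ℝ V.direction] {p : P} {R : ℝ}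
    {ε : ℝ≥0} (hp : p ∈ V) (hR : 0 ≤ R) (hε : 0 < ε) :
    (coveringNumber ε ((V : Set P) ∩ closedBall p R) : ℝ≥0∞) ≤
      ENNReal.ofReal ((1 + 2 * R / ε) ^ finrank ℝ V.direction) := by
  have hiso : Isometry fun w : V.direction ↦ (w : E) +ᵥ p :=
    Isometry.of_dist_eq fun w w' ↦ dist_vadd_cancel_right (w : E) w' p
  have himage : (fun w : V.direction ↦ (w : E) +ᵥ p) '' closedBall 0 R =
      (V : Set P) ∩ closedBall p R := by
    ext q
    constructor
    · rintro ⟨w, hw, rfl⟩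
      exact ⟨V.vadd_mem_of_mem_direction w.2 hp, by simpa using hw⟩
    · rintro ⟨hqV, hqp⟩
      exact ⟨⟨q -ᵥ p, V.vsub_mem_direction hqV hp⟩, by simpa [← dist_eq_norm_vsub] using hqp,
        vsub_vadd q p⟩
  rw [← himage, hiso.coveringNumber_image]
  exact coveringNumber_closedBall_le 0 hR hε

variable [Nonempty V] [V.direction.HasOrthogonalProjection]

theorem lipschitzWith_orthogonalProjection :
    LipschitzWith 1 (EuclideanGeometry.orthogonalProjection V) := by
  refine LipschitzWith.of_dist_le_mul fun p q ↦ ?_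
  rw [NNReal.coe_one, one_mul, dist_eq_norm_vsub V.direction, dist_eq_norm_vsub E,
    ← ContinuousAffineMap.contLinear_map_vsub, EuclideanGeometry.orthogonalProjection_contLinear]
  exact V.direction.norm_orthogonalProjectionOnto_apply_le (p -ᵥ q)

theorem isCover_inter_closedBall_orthogonalProjection {A : Set P} {x : P} {r : ℝ} {δ : ℝ≥0}
    (hA : A ⊆ closedBall x r) (hV : ∀ y ∈ A, infDist y V ≤ δ) :
    IsCover δ A (V ∩ closedBall (EuclideanGeometry.orthogonalProjection V x : P) r) := by
  intro y hy
  refine ⟨EuclideanGeometry.orthogonalProjection V y,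
    ⟨EuclideanGeometry.orthogonalProjection_mem y, ?_⟩, ?_⟩
  · calc dist (EuclideanGeometry.orthogonalProjection V y : P)
          (EuclideanGeometry.orthogonalProjection V x)
        ≤ dist y x := by simpa using lipschitzWith_orthogonalProjection.dist_le_mul y x
      _ ≤ r := hA hy
  · have hdist := hV y hy
    rw [← EuclideanGeometry.dist_orthogonalProjection_eq_infDist, dist_nndist] at hdist
    change edist y (EuclideanGeometry.orthogonalProjection V y : P) ≤ δ
    rw [edist_nndist]
    exact_mod_cast hdist

end AffineSubspace

theorem isCover_trans {X : Type*} [PseudoEMetricSpace X] {s t N : Set X} {δ ε : ℝ≥0}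
    (hst : IsCover δ s t) (htN : IsCover ε t N) : IsCover (δ + ε) s N := by
  intro x hx
  obtain ⟨y, hy, hxy⟩ := hst hx
  obtain ⟨z, hz, hyz⟩ := htN hy
  refine ⟨z, hz, (edist_triangle x y z).trans ?_⟩
  rw [ENNReal.coe_add]
  exact add_le_add hxy hyz

theorem exists_affineSubspace_finrank_direction_eq {K E : Type*} [DivisionRing K] [AddCommGroup E]
    [Module K E] {k : ℕ} (hk : k ≤ finrank K E) :
    ∃ V : AffineSubspace K E, (V : Set E).Nonempty ∧ finrank K V.direction = k := by
  obtain ⟨f, hf⟩ := exists_linearIndependent_of_le_finrank hk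
  refine ⟨(Submodule.span K (Set.range f)).toAffineSubspace, ⟨0, Submodule.zero_mem _⟩, ?_⟩
  rw [Submodule.toAffineSubspace_direction, finrank_span_eq_card hf, Fintype.card_fin]

section HausdorffContent

variable {n : ℕ} {s : ℝ} {A : Set (EuclideanSpace ℝ (Fin n))}

theorem hContent_le_tsum {ι : Type*} [Countable ι] (hs : 0 < s)
    {U : ι → Set (EuclideanSpace ℝ (Fin n))} (hA : A ⊆ ⋃ i, U i) :
    hContent s A ≤ ∑' i, ediam (U i) ^ s := by
  cases nonempty_encodable ι
  refine (iInf₂_le (fun k ↦ ⋃ i ∈ Encodable.decode₂ ι k, U i) ?_).trans_eq ?_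
  · rwa [Encodable.iUnion_decode₂]
  · refine tsum_iUnion_decode₂ (fun S ↦ ediam S ^ s) ?_ U
    rw [ediam_empty, ENNReal.zero_rpow_of_pos hs]

theorem hContent_le_encard_mul_of_isCover (hs : 0 < s) {ε : ℝ≥0}
    {N : Set (EuclideanSpace ℝ (Fin n))} (hN : N.Countable) (hcover : IsCover ε A N) :
    hContent s A ≤ N.encard * (2 * ε : ℝ≥0∞) ^ s := by
  have : Countable N := hN
  calc hContent s A ≤ ∑' c : N, ediam (closedEBall (c : EuclideanSpace ℝ (Fin n)) ε) ^ s := by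
        refine hContent_le_tsum hs ?_
        rw [Set.iUnion_coe_set]
        exact isCover_iff_subset_iUnion_closedEBall.1 hcover
    _ ≤ ∑' _ : N, (2 * ε : ℝ≥0∞) ^ s := by
        gcongr
        exact ediam_closedEBall_le
    _ = N.encard * (2 * ε : ℝ≥0∞) ^ s := ENNReal.tsum_const _

theorem hContent_le_of_infDist_le {x : EuclideanSpace ℝ (Fin n)} {r δ : ℝ}
    {V : AffineSubspace ℝ (EuclideanSpace ℝ (Fin n))} (hs : 0 < s) (hr : 0 ≤ r) (hδ : 0 < δ)
    (hne : (V : Set (EuclideanSpace ℝ (Fin n))).Nonempty) (hA : A ⊆ closedBall x r)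
    (hV : ∀ y ∈ A, infDist y V ≤ δ) :
    hContent s A ≤
      ENNReal.ofReal ((1 + 2 * r / δ) ^ finrank ℝ V.direction * (4 * δ) ^ s) := by
  have : Nonempty V := hne.to_subtype
  lift δ to ℝ≥0 using hδ.le
  have hcount := coveringNumber_inter_closedBall_le
    (EuclideanGeometry.orthogonalProjection_mem (s := V) x) hr (NNReal.coe_pos.1 hδ)
  obtain ⟨N, -, hNfin, hNcover, hNcard⟩ := exists_set_encard_eq_coveringNumber
    (ENat.toENNReal_ne_top.1 (ne_top_of_le_ne_top ENNReal.ofReal_ne_top hcount))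
  have hcover : IsCover (δ + δ) A N :=
    isCover_trans (isCover_inter_closedBall_orthogonalProjection hA hV) hNcover
  have hdiam : (2 * (δ + δ : ℝ≥0) : ℝ≥0∞) ^ s = ENNReal.ofReal ((4 * δ) ^ s) := by
    rw [← ENNReal.ofReal_rpow_of_nonneg (by positivity) hs.le, ENNReal.ofReal_mul (by norm_num),
      ENNReal.ofReal_coe_nnreal, ← two_mul, ENNReal.coe_mul, ← mul_assoc]
    norm_num
  rw [← hNcard] at hcount
  rw [ENNReal.ofReal_mul (by positivity), ← hdiam]
  exact (hContent_le_encard_mul_of_isCover hs hNfin.countable hcover).trans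
    (mul_le_mul_left hcount _)

end HausdorffContent

theorem exists_pos_add_two_pow_mul_rpow_lt (d : ℕ) (C : ℝ) {t c : ℝ} (ht : 0 < t) (hc : 0 < c) :
    ∃ β : ℝ, 0 < β ∧ (β + 2) ^ d * C * β ^ t < c := by
  have hlim : Tendsto (fun β : ℝ ↦ (β + 2) ^ d * C * β ^ t) (𝓝 0) (𝓝 0) := by
    have hcont : ContinuousAt (fun β : ℝ ↦ (β + 2) ^ d * C * β ^ t) 0 :=
      ContinuousAt.mul (by fun_prop) (Real.continuousAt_rpow_const 0 t (Or.inr ht.le))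
    simpa [Real.zero_rpow ht.ne'] using hcont.tendsto
  have hsmall : ∀ᶠ β : ℝ in 𝓝[>] 0, (β + 2) ^ d * C * β ^ t < c :=
    (hlim.mono_left nhdsWithin_le_nhds).eventually_lt_const hc
  exact (eventually_mem_nhdsWithin.and hsmall).exists

theorem one_add_div_pow_mul_rpow_eq (d : ℕ) (s : ℝ) {β r : ℝ} (hβ : 0 < β) (hr : 0 < r) :
    (1 + 2 * r / (β * r)) ^ d * (4 * (β * r)) ^ s =
      (β + 2) ^ d * 4 ^ s * β ^ (s - d) * r ^ s := by
  have hbase : 1 + 2 * r / (β * r) = (β + 2) / β := by field_simp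
  rw [hbase, div_pow, Real.mul_rpow (by norm_num) (by positivity), Real.mul_rpow hβ.le hr.le,
    Real.rpow_sub_natCast hβ.ne']
  ring

theorem stmt12_general (n d : ℕ) (s : ℝ) (hs : (d : ℝ) < s) (c₀ : ℝ) (hc₀ : 0 < c₀) :
    ∃ β : ℝ, 0 < β ∧
      ∀ (E : Set (EuclideanSpace ℝ (Fin n))) (x : EuclideanSpace ℝ (Fin n)) (r : ℝ), 0 < r →
        ENNReal.ofReal (c₀ * r ^ s) ≤ hContent s (E ∩ closedBall x r) →
        ∀ V : AffineSubspace ℝ (EuclideanSpace ℝ (Fin n)),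
          (V : Set (EuclideanSpace ℝ (Fin n))).Nonempty → finrank ℝ V.direction = d →
          ∃ y ∈ E ∩ closedBall x r, β * r ≤ infDist y V := by
  have hs_pos : 0 < s := d.cast_nonneg.trans_lt hs
  obtain ⟨β, hβ, hβ_small⟩ :=
    exists_pos_add_two_pow_mul_rpow_lt d (4 ^ s) (sub_pos.2 hs) hc₀
  refine ⟨β, hβ, fun E x r hr hE V hne hV ↦ ?_⟩
  by_contra! hflat
  have hupper := hContent_le_of_infDist_le hs_pos hr.le (mul_pos hβ hr) hne
    Set.inter_subset_right fun y hy ↦ (hflat y hy).le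
  rw [hV, one_add_div_pow_mul_rpow_eq d s hβ hr] at hupper
  refine (hE.trans hupper).not_gt ((ENNReal.ofReal_lt_ofReal_iff (by positivity)).2 ?_)
  gcongr

theorem le_bbeta_of_forall_exists_le_infDist {d : ℕ} {E : Set (EuclideanSpace ℝ (Fin (d + 1)))}
    {x : EuclideanSpace ℝ (Fin (d + 1))} {r β : ℝ} (hr : 0 < r)
    (h : ∀ V : AffineSubspace ℝ (EuclideanSpace ℝ (Fin (d + 1))),
      (V : Set (EuclideanSpace ℝ (Fin (d + 1)))).Nonempty → finrank ℝ V.direction = d →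
      ∃ y ∈ E ∩ closedBall x r, β * r ≤ infDist y V) :
    β ≤ bbeta d E x r := by
  refine le_csInf ?_ ?_
  · obtain ⟨V, hne, hV⟩ := exists_affineSubspace_finrank_direction_eq (K := ℝ)
      (E := EuclideanSpace ℝ (Fin (d + 1))) (k := d) (by simp)
    exact ⟨_, V, hne, hV, rfl⟩
  · rintro _ ⟨V, hne, hV, rfl⟩
    obtain ⟨y, hy, hyV⟩ := h V hne hV
    have hbdd : BddAbove ((fun y ↦ infDist y V) '' (E ∩ closedBall x r)) :=
      ((isCompact_closedBall x r).bddAbove_image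
        (continuous_infDist_pt _).continuousOn).mono (Set.image_mono Set.inter_subset_right)
    have hfirst : β ≤ sSup ((fun y ↦ infDist y V) '' (E ∩ closedBall x r)) / r :=
      (le_div_iff₀ hr).2 (hyV.trans (le_csSup hbdd ⟨y, hy, rfl⟩))
    have hsecond : 0 ≤ sSup ((fun y ↦ infDist y E) '' (V ∩ closedBall x r)) / r :=
      div_nonneg (Real.sSup_nonneg (Set.forall_mem_image.2 fun _ _ ↦ infDist_nonneg)) hr.le
    exact le_add_of_le_of_nonneg hfirst hsecond

/-- if `s > d` and `H^s_∞(E ∩ B(x,r)) ≥ c₀ r^s`, then `E` is uniformly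
non-flat in `B(x,r)`: `bβ_E(x,r) ≥ β` with `β = β(d,s,c₀) > 0`. -/
theorem stmt12 (d : ℕ) (s : ℝ) (hs : (d : ℝ) < s) (c₀ : ℝ) (hc₀ : 0 < c₀) :
    ∃ β : ℝ, 0 < β ∧
      ∀ (E : Set (EuclideanSpace ℝ (Fin (d+1))))
        (x : EuclideanSpace ℝ (Fin (d+1))) (r : ℝ), 0 < r →
        ENNReal.ofReal (c₀ * r ^ s) ≤ hContent s (E ∩ closedBall x r) →
        β ≤ bbeta d E x r := by
  obtain ⟨β, hβ, hfar⟩ := stmt12_general (d + 1) d s hs c₀ hc₀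
  exact ⟨β, hβ, fun E x r hr hE ↦ le_bbeta_of_forall_exists_le_infDist hr (hfar E x r hr hE)⟩
end

section
/- Let d ∈ ℕ, C₁ ≥ 1 and δ₀ > 0, let s_j ∈ (0, d+1] be a sequence with s_j → s > 0, and let Σ_j ⊆ B(0,10) ⊆ ℝ^{d+1} be nonempty compact sets with diam Σ_j ≥ δ₀, each Ahlfors s_j-regular with constant C₁, converging in the Hausdorff metric to a compact set Σ. Then there is a constant C ≥ 1, depending only on d, C₁, s and δ₀, such that C⁻¹ r^s ≤ H^s(Σ ∩ B(x,r)) ≤ C r^s for all x ∈ Σ and 0 < r < diam Σ. -/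
open MeasureTheory Metric Filter
open scoped ENNReal NNReal

open MeasureTheory Metric Filter
open scoped ENNReal

/-!
Both bounds are local: they hold at scales `r < δ₀ / 2` with a constant depending only on `C₁` and
`s`. For the upper bound, a maximal `ε`-separated subset of `Σ_j ∩ B(x, r)` has at most a constant
times `(r / ε) ^ s_j` points by comparing measures. With `ε` fixed and `j` large this bounds the
covering number of `Σ ∩ B(x, r)`, and since `s_j → s` the bound passes to the limit for that `ε`;
then `ε → 0`. For the lower bound, compactness reduces a cover of `Σ ∩ B(x, r)` to finitely many
open balls, which for large `j` also cover `Σ_j ∩ B(x_j, r / 2)` for some `x_j ∈ Σ_j`; the upper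
regularity of `Σ_j` then bounds the sum of the radii to the power `s_j` from below, and the sum is
finite, so `j → ∞` is harmless. Total boundedness of the ambient ball extends both bounds to all
scales up to the diameter.
-/

section

open Set Topology

section CoveringNumbers

theorem externalCoveringNumber_add_le_of_isCover {X : Type*} [PseudoEMetricSpace X]
    {A A' : Set X} {η : ℝ≥0} (h : IsCover η A A') (ε : ℝ≥0) :
    externalCoveringNumber (ε + η) A ≤ externalCoveringNumber ε A' := by
  refine le_iInf₂ fun N hN => IsCover.externalCoveringNumber_le_encard fun a ha => ?_
  obtain ⟨a', ha', haa'⟩ := h ha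
  obtain ⟨y, hy, ha'y⟩ := hN ha'
  refine ⟨y, hy, (edist_triangle a a' y).trans ?_⟩
  rw [ENNReal.coe_add, add_comm]
  exact add_le_add ha'y haa'

theorem exists_isCover_encard_eq_externalCoveringNumber {X : Type*} [PseudoEMetricSpace X]
    (ε : ℝ≥0) (A : Set X) : ∃ N : Set X, IsCover ε A N ∧ N.encard = externalCoveringNumber ε A := by
  have : Nonempty {N : Set X // IsCover ε A N} := ⟨⟨A, .refl ε A⟩⟩
  obtain ⟨⟨N, hN⟩, h⟩ := ENat.exists_eq_iInf fun N : {N : Set X // IsCover ε A N} => N.1.encard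
  exact ⟨N, hN, h.trans iInf_subtype⟩

theorem packingNumber_two_mul_mul_le_measure {X : Type*} [PseudoMetricSpace X] [MeasurableSpace X]
    [OpensMeasurableSpace X] (μ : Measure X) {A : Set X} {ε : ℝ≥0} {m : ℝ≥0∞}
    (h : ∀ a ∈ A, m ≤ μ (closedBall a ε)) :
    (packingNumber (2 * ε) A : ℝ≥0∞) * m ≤ μ (⋃ a ∈ A, closedBall a ε) := by
  simp only [packingNumber, ENat.toENNReal_iSup, ENNReal.iSup_mul, iSup_le_iff]
  intro P hPA hP
  have hdisj : Pairwise (Function.onFun Disjoint fun a : P => closedBall (a : X) ε) := by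
    intro a b hab
    refine closedBall_disjoint_closedBall ?_
    have hab_sep : ((2 * ε : ℝ≥0) : ℝ≥0∞) < edist (a : X) b :=
      hP a.2 b.2 (Subtype.coe_ne_coe.2 hab)
    rw [edist_nndist, ENNReal.coe_lt_coe] at hab_sep
    rw [← two_mul]
    exact_mod_cast hab_sep
  calc (P.encard : ℝ≥0∞) * m = ∑' _ : P, m := (ENNReal.tsum_set_const P m).symm
    _ ≤ ∑' a : P, μ (closedBall (a : X) ε) := ENNReal.tsum_le_tsum fun a => h a (hPA a.2)
    _ ≤ μ (⋃ a : P, closedBall (a : X) ε) :=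
      tsum_meas_le_meas_iUnion_of_disjoint μ (fun _ => measurableSet_closedBall) hdisj
    _ ≤ μ (⋃ a ∈ A, closedBall a ε) := measure_mono <| iUnion_subset fun a =>
      subset_biUnion_of_mem (u := fun a : X => closedBall a ε) (hPA a.2)

end CoveringNumbers

section HausdorffMeasure

theorem exists_ball_superset_rpow_le_ediam_rpow_add {X : Type*} [PseudoMetricSpace X]
    [Nonempty X] {s : ℝ} (hs : 0 < s) {η : ℝ} {t : Set X} (ht : ediam t < ENNReal.ofReal η)
    {e : ℝ≥0∞} (he : 0 < e) :
    ∃ (c : X) (ρ : ℝ), 0 < ρ ∧ ρ < η ∧ t ⊆ ball c ρ ∧ ENNReal.ofReal (ρ ^ s) ≤ ediam t ^ s + e := by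
  have ht_top : ediam t ≠ ⊤ := ht.ne_top
  have h_small : ∀ᶠ ρ in 𝓝[>] diam t, ENNReal.ofReal (ρ ^ s) < ediam t ^ s + e := by
    have h_lim : Tendsto (fun ρ : ℝ => ENNReal.ofReal (ρ ^ s)) (𝓝[>] diam t) (𝓝 (ediam t ^ s)) := by
      rw [← ENNReal.ofReal_toReal ht_top, ENNReal.ofReal_rpow_of_nonneg ENNReal.toReal_nonneg hs.le]
      exact (ENNReal.tendsto_ofReal (Real.continuousAt_rpow_const _ _ (.inr hs.le))).mono_left
        nhdsWithin_le_nhds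
    exact h_lim.eventually_lt_const (ENNReal.lt_add_right (by finiteness) he.ne')
  have hdη : diam t < η := (ENNReal.lt_ofReal_iff_toReal_lt ht_top).1 ht
  obtain ⟨ρ, ⟨hρ, htρ, hρη⟩⟩ := (h_small.and (Ioo_mem_nhdsGT hdη)).exists
  obtain ⟨c, hc⟩ : ∃ c, t ⊆ ball c ρ := by
    rcases t.eq_empty_or_nonempty with rfl | ⟨c, hc⟩
    · exact ⟨Classical.arbitrary X, empty_subset _⟩
    · exact ⟨c, fun z hz => (dist_le_diam_of_mem' ht_top hz hc).trans_lt htρ⟩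
  exact ⟨c, ρ, diam_nonneg.trans_lt htρ, hρη, hc, hρ.le⟩

theorem hausdorffMeasure_le_of_frequently_externalCoveringNumber_mul_le {X : Type*}
    [EMetricSpace X] [MeasurableSpace X] [BorelSpace X] {A : Set X} {s : ℝ} (hs : 0 ≤ s) {M : ℝ≥0∞}
    (h : ∃ᶠ ε : ℝ≥0 in 𝓝[>] 0,
      (externalCoveringNumber ε A : ℝ≥0∞) * ENNReal.ofReal ((2 * ε) ^ s) ≤ M) :
    μH[s] A ≤ M := by
  rcases eq_or_ne M ⊤ with rfl | hM
  · exact le_top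
  obtain ⟨ε, hε_lim, hε⟩ :=
    exists_seq_forall_of_frequently (h.and_eventually self_mem_nhdsWithin)
  choose N hN hN_card using fun n => exists_isCover_encard_eq_externalCoveringNumber (ε n) A
  have hN_fin : ∀ n, (N n).Finite := fun n => by
    rw [← encard_ne_top_iff, hN_card]
    intro h_top
    have hpos : ENNReal.ofReal ((2 * ε n) ^ s) ≠ 0 :=
      (ENNReal.ofReal_pos.2 (Real.rpow_pos_of_pos (mul_pos two_pos (hε n).2) s)).ne'
    exact hM (top_le_iff.1 (by simpa [h_top, ENNReal.top_mul hpos] using (hε n).1))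
  have (n : ℕ) : Countable (N n) := (hN_fin n).countable
  have hr : Tendsto (fun n => (2 * ε n : ℝ≥0∞)) atTop (𝓝 0) := by
    simpa using ENNReal.Tendsto.const_mul (a := 2)
      (ENNReal.tendsto_coe.2 (hε_lim.mono_right nhdsWithin_le_nhds)) (.inr ENNReal.ofNat_ne_top)
  have hdiam : ∀ n (a : N n), ediam (closedEBall (a : X) (ε n)) ≤ 2 * ε n := fun _ _ =>
    ediam_closedEBall_le
  have hcover : ∀ n, A ⊆ ⋃ a : N n, closedEBall (a : X) (ε n) := fun n => by
    simpa only [iUnion_coe_set] using isCover_iff_subset_iUnion_closedEBall.1 (hN n)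
  refine (Measure.hausdorffMeasure_le_liminf_tsum s A _ hr _ (.of_forall hdiam)
    (.of_forall hcover)).trans <| liminf_le_of_le (by isBoundedDefault) fun b hb => ?_
  obtain ⟨n, hn⟩ := hb.exists
  calc b ≤ ∑' a : N n, ediam (closedEBall (a : X) (ε n)) ^ s := hn
    _ ≤ ∑' _ : N n, (2 * ε n : ℝ≥0∞) ^ s :=
      ENNReal.tsum_le_tsum fun a => ENNReal.rpow_le_rpow (hdiam n a) hs
    _ = (externalCoveringNumber (ε n) A : ℝ≥0∞) * ENNReal.ofReal ((2 * ε n) ^ s) := by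
      rw [ENNReal.tsum_set_const, hN_card,
        ← ENNReal.ofReal_rpow_of_nonneg (by positivity) hs, ENNReal.ofReal_mul zero_le_two,
        ENNReal.ofReal_ofNat, ENNReal.ofReal_coe_nnreal]
    _ ≤ M := (hε n).1

theorem le_hausdorffMeasure_of_forall_finite_ball_cover {X : Type*} [MetricSpace X]
    [MeasurableSpace X] [BorelSpace X] [Nonempty X] {A : Set X} {s : ℝ} (hA : IsCompact A)
    (hs : 0 < s) {η : ℝ} (hη : 0 < η) {M : ℝ≥0∞}
    (h : ∀ (F : Finset ℕ) (c : ℕ → X) (ρ : ℕ → ℝ), (∀ n, 0 < ρ n) → (∀ n, ρ n < η) →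
      A ⊆ ⋃ n ∈ F, ball (c n) (ρ n) → M ≤ ∑ n ∈ F, ENNReal.ofReal (ρ n ^ s)) :
    M ≤ μH[s] A := by
  rw [Measure.hausdorffMeasure_apply]
  refine le_iSup₂_of_le (ENNReal.ofReal (η / 2)) (by simpa using hη) <|
    le_iInf fun t => le_iInf₂ fun ht_cover ht_diam =>
      ENNReal.le_of_forall_pos_le_add fun ε hε _ => ?_
  obtain ⟨e, he_pos, he_sum⟩ := ENNReal.exists_pos_sum_of_countable' (ENNReal.coe_pos.2 hε).ne' ℕ
  choose c ρ hρ_pos hρη ht_ball hρ using fun n =>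
    exists_ball_superset_rpow_le_ediam_rpow_add hs (η := η)
      ((ht_diam n).trans_lt ((ENNReal.ofReal_lt_ofReal_iff hη).2 (half_lt_self hη))) (he_pos n)
  obtain ⟨F, hF⟩ := hA.elim_finite_subcover (fun n => ball (c n) (ρ n)) (fun _ => isOpen_ball)
    (ht_cover.trans (iUnion_mono ht_ball))
  calc M ≤ ∑ n ∈ F, ENNReal.ofReal (ρ n ^ s) := h F c ρ hρ_pos hρη hF
    _ ≤ ∑ n ∈ F, (ediam (t n) ^ s + e n) := Finset.sum_le_sum fun n _ => hρ n
    _ ≤ ∑' n, (ediam (t n) ^ s + e n) := ENNReal.sum_le_tsum F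
    _ = ∑' n, ediam (t n) ^ s + ∑' n, e n := ENNReal.tsum_add
    _ ≤ (∑' n, ⨆ _ : (t n).Nonempty, ediam (t n) ^ s) + ε := by
      refine add_le_add (ENNReal.tsum_le_tsum fun n => ?_) he_sum.le
      rcases (t n).eq_empty_or_nonempty with h_empty | h_nonempty
      · simp [h_empty, hs]
      · simp [h_nonempty]

end HausdorffMeasure

section AhlforsRegular

variable {X : Type*} [MetricSpace X] [MeasurableSpace X] [BorelSpace X]
  {E : Set X} {x : X} {δ s C r : ℝ}

/-- Ahlfors `s`-regularity with constant `C` at the scales below `δ`, in any metric space.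
`AhlforsRegular` is the case where `δ` is the diameter of the set; decoupling the two lets a whole
sequence of sets share a range of scales. -/
def AhlforsRegularBelow (δ s C : ℝ) (E : Set X) : Prop :=
  ∀ x ∈ E, ∀ r : ℝ, 0 < r → r < δ →
    ENNReal.ofReal (C⁻¹ * r ^ s) ≤ μH[s] (E ∩ closedBall x r) ∧
    μH[s] (E ∩ closedBall x r) ≤ ENNReal.ofReal (C * r ^ s)

theorem ahlforsRegular_iff_ahlforsRegularBelow_diam {n : ℕ} {E : Set (EuclideanSpace ℝ (Fin n))}
    (hE : Bornology.IsBounded E) : AhlforsRegular s C E ↔ AhlforsRegularBelow (diam E) s C E :=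
  forall₄_congr fun _ _ _ hr =>
    imp_congr (ENNReal.ofReal_lt_iff_lt_toReal hr.le hE.ediam_ne_top) Iff.rfl

namespace AhlforsRegularBelow

theorem mono_scale {δ' : ℝ} (h : AhlforsRegularBelow δ s C E) (hδ : δ' ≤ δ) :
    AhlforsRegularBelow δ' s C E := fun x hx r hr hrδ => h x hx r hr (hrδ.trans_le hδ)


theorem measure_inter_closedBall_le (h : AhlforsRegularBelow δ s C E) (c : X) {ρ : ℝ}
    (hρ : 0 < ρ) (hρδ : 2 * ρ < δ) :
    μH[s] (E ∩ closedBall c ρ) ≤ ENNReal.ofReal (C * (2 * ρ) ^ s) := by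
  rcases (E ∩ closedBall c ρ).eq_empty_or_nonempty with h_empty | ⟨y, hyE, hy⟩
  · simp [h_empty]
  · have h_sub : closedBall c ρ ⊆ closedBall y (2 * ρ) :=
      closedBall_subset_closedBall' (by rw [dist_comm]; linarith [mem_closedBall.1 hy])
    exact (measure_mono (inter_subset_inter_right E h_sub)).trans
      (h y hyE (2 * ρ) (by positivity) hρδ).2

theorem measure_le_sum (h : AhlforsRegularBelow δ s C E) {ι : Type*} {F : Finset ι} {c : ι → X}
    {ρ : ι → ℝ} (hρ : ∀ i, 0 < ρ i) (hρδ : ∀ i, 2 * ρ i < δ) {A : Set X} (hAE : A ⊆ E)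
    (hA : A ⊆ ⋃ i ∈ F, closedBall (c i) (ρ i)) :
    μH[s] A ≤ ∑ i ∈ F, ENNReal.ofReal (C * (2 * ρ i) ^ s) := by
  calc μH[s] A ≤ μH[s] (⋃ i ∈ F, E ∩ closedBall (c i) (ρ i)) := by
        rw [← inter_iUnion₂]
        exact measure_mono (subset_inter hAE hA)
    _ ≤ ∑ i ∈ F, μH[s] (E ∩ closedBall (c i) (ρ i)) := measure_biUnion_finset_le F _
    _ ≤ ∑ i ∈ F, ENNReal.ofReal (C * (2 * ρ i) ^ s) :=
      Finset.sum_le_sum fun i _ => h.measure_inter_closedBall_le (c i) (hρ i) (hρδ i)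

theorem packingNumber_two_mul_mul_le (h : AhlforsRegularBelow δ s C E) (hx : x ∈ E) {ε : ℝ≥0}
    (hε : 0 < ε) (hr : 0 ≤ r) (hrδ : r + ε < δ) :
    (packingNumber (2 * ε) (E ∩ closedBall x r) : ℝ≥0∞) * ENNReal.ofReal (C⁻¹ * ε ^ s) ≤
      ENNReal.ofReal (C * (r + ε) ^ s) := by
  have hε' : (0 : ℝ) < ε := hε
  have h_mass : ∀ a ∈ E ∩ closedBall x r,
      ENNReal.ofReal (C⁻¹ * ε ^ s) ≤ (μH[s]).restrict E (closedBall a ε) := fun a ha => by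
    rw [Measure.restrict_apply measurableSet_closedBall, inter_comm]
    exact (h a ha.1 ε hε' (by linarith)).1
  have h_sub : ⋃ a ∈ E ∩ closedBall x r, closedBall a ε ⊆ closedBall x (r + ε) :=
    iUnion₂_subset fun a ha => closedBall_subset_closedBall' <| by
      linarith [mem_closedBall.1 ha.2]
  calc _ ≤ (μH[s]).restrict E (⋃ a ∈ E ∩ closedBall x r, closedBall a ε) :=
        packingNumber_two_mul_mul_le_measure _ h_mass
    _ ≤ (μH[s]).restrict E (closedBall x (r + ε)) := measure_mono h_sub
    _ = μH[s] (E ∩ closedBall x (r + ε)) := by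
      rw [Measure.restrict_apply measurableSet_closedBall, inter_comm]
    _ ≤ ENNReal.ofReal (C * (r + ε) ^ s) := (h x hx (r + ε) (by positivity) hrδ).2

theorem externalCoveringNumber_four_mul_mul_le (h : AhlforsRegularBelow δ s C E) (hx : x ∈ E)
    {ε : ℝ≥0} (hε : 0 < ε) (hr : 0 ≤ r) (hrδ : r + ε < δ) {A : Set X}
    (hA : IsCover (2 * ε) A (E ∩ closedBall x r)) :
    (externalCoveringNumber (4 * ε) A : ℝ≥0∞) * ENNReal.ofReal (C⁻¹ * ε ^ s) ≤
      ENNReal.ofReal (C * (r + ε) ^ s) := by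
  have h_num : externalCoveringNumber (4 * ε) A ≤ packingNumber (2 * ε) (E ∩ closedBall x r) := by
    calc externalCoveringNumber (4 * ε) A = externalCoveringNumber (2 * ε + 2 * ε) A := by
          rw [← add_mul]; norm_num
      _ ≤ externalCoveringNumber (2 * ε) (E ∩ closedBall x r) :=
        externalCoveringNumber_add_le_of_isCover hA _
      _ ≤ coveringNumber (2 * ε) (E ∩ closedBall x r) :=
        externalCoveringNumber_le_coveringNumber _ _
      _ ≤ packingNumber (2 * ε) (E ∩ closedBall x r) := coveringNumber_le_packingNumber _ _
  calc _ ≤ (packingNumber (2 * ε) (E ∩ closedBall x r) : ℝ≥0∞) * ENNReal.ofReal (C⁻¹ * ε ^ s) :=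
        mul_le_mul_left (ENat.toENNReal_mono h_num) _
    _ ≤ ENNReal.ofReal (C * (r + ε) ^ s) := h.packingNumber_two_mul_mul_le hx hε hr hrδ

end AhlforsRegularBelow

end AhlforsRegular

section HausdorffLimit

variable {ι : Type*} {l : Filter ι}

theorem tendsto_ofReal_mul_rpow {t : ι → ℝ} {s : ℝ} (ht : Tendsto t l (𝓝 s)) (c : ℝ) {a : ℝ}
    (ha : 0 < a) :
    Tendsto (fun j => ENNReal.ofReal (c * a ^ t j)) l (𝓝 (ENNReal.ofReal (c * a ^ s))) :=
  ENNReal.tendsto_ofReal <|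
    ((Real.continuous_const_rpow ha.ne').continuousAt.tendsto.comp ht).const_mul c

section Convergence

variable {X : Type*} [PseudoMetricSpace X] {E : ι → Set X} {S : Set X} {x : X} {r r' : ℝ}

theorem tendsto_hausdorffEDist_of_tendsto_hausdorffDist (hE_ne : ∀ j, (E j).Nonempty)
    (hE_bdd : ∀ j, Bornology.IsBounded (E j)) (hS_ne : S.Nonempty) (hS_bdd : Bornology.IsBounded S)
    (hE : Tendsto (fun j => hausdorffDist (E j) S) l (𝓝 0)) :
    Tendsto (fun j => hausdorffEDist (E j) S) l (𝓝 0) :=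
  (ENNReal.tendsto_toReal_zero_iff fun j =>
    hausdorffEDist_ne_top_of_nonempty_of_bounded (hE_ne j) hS_ne (hE_bdd j) hS_bdd).1 hE

theorem eventually_exists_dist_lt_of_tendsto_hausdorffEDist
    (hE : Tendsto (fun j => hausdorffEDist (E j) S) l (𝓝 0)) {η : ℝ} (hη : 0 < η) :
    ∀ᶠ j in l, (∀ x ∈ S, ∃ y ∈ E j, dist x y < η) ∧ ∀ y ∈ E j, ∃ x ∈ S, dist y x < η := by
  filter_upwards [hE.eventually_lt_const (ENNReal.ofReal_pos.2 hη)] with j hj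
  simp only [← edist_lt_ofReal]
  exact ⟨fun x hx => exists_edist_lt_of_hausdorffEDist_lt hx (by rwa [hausdorffEDist_comm]),
    fun y hy => exists_edist_lt_of_hausdorffEDist_lt hy hj⟩

theorem subset_closure_of_tendsto_hausdorffEDist [l.NeBot]
    (hE : Tendsto (fun j => hausdorffEDist (E j) S) l (𝓝 0)) {B : Set X} (hB : ∀ j, E j ⊆ B) :
    S ⊆ closure B := fun x hx => Metric.mem_closure_iff.2 fun η hη => by
  obtain ⟨j, hj, -⟩ := (eventually_exists_dist_lt_of_tendsto_hausdorffEDist hE hη).exists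
  obtain ⟨y, hy, hxy⟩ := hj x hx
  exact ⟨y, hB j hy, hxy⟩

theorem eventually_exists_isCover_inter_closedBall
    (hE : Tendsto (fun j => hausdorffEDist (E j) S) l (𝓝 0)) (hx : x ∈ S) {η : ℝ≥0} (hη : 0 < η)
    (hr : r + 2 * η ≤ r') :
    ∀ᶠ j in l, ∃ x' ∈ E j, IsCover η (S ∩ closedBall x r) (E j ∩ closedBall x' r') := by
  filter_upwards [eventually_exists_dist_lt_of_tendsto_hausdorffEDist hE (NNReal.coe_pos.2 hη)]
    with j hj
  obtain ⟨x', hx', hxx'⟩ := hj.1 x hx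
  refine ⟨x', hx', fun a ha => ?_⟩
  obtain ⟨b, hb, hab⟩ := hj.1 a ha.1
  refine ⟨b, ⟨hb, ?_⟩, edist_le_coe.2 (by exact_mod_cast hab.le)⟩
  have := dist_triangle4 b a x x'
  rw [dist_comm b a] at this
  exact mem_closedBall.2 (by linarith [mem_closedBall.1 ha.2])

theorem eventually_exists_inter_closedBall_subset
    (hE : Tendsto (fun j => hausdorffEDist (E j) S) l (𝓝 0)) (hx : x ∈ S) (hS : IsCompact S)
    {U : Set X} (hU : IsOpen U) (hSU : S ∩ closedBall x r ⊆ U) (hr : r' < r) :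
    ∀ᶠ j in l, ∃ x' ∈ E j, E j ∩ closedBall x' r' ⊆ U := by
  obtain ⟨τ, hτ, hτU⟩ :=
    (hS.inter_right isClosed_closedBall).exists_thickening_subset_open hU hSU
  have hη : 0 < min τ ((r - r') / 2) := lt_min hτ (by linarith)
  filter_upwards [eventually_exists_dist_lt_of_tendsto_hausdorffEDist hE hη] with j hj
  simp only [lt_min_iff] at hj
  obtain ⟨x', hx', -, hxx'⟩ := hj.1 x hx
  refine ⟨x', hx', fun y hy => hτU ?_⟩
  obtain ⟨z, hz, hyzτ, hyz⟩ := hj.2 y hy.1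
  refine mem_thickening_iff.2 ⟨z, ⟨hz, ?_⟩, hyzτ⟩
  have := dist_triangle4 z y x' x
  rw [dist_comm z y, dist_comm x' x] at this
  exact mem_closedBall.2 (by linarith [mem_closedBall.1 hy.2])

end Convergence

namespace AhlforsRegularBelow

variable {X : Type*} [MetricSpace X] [MeasurableSpace X] [BorelSpace X] [l.NeBot]
  {t : ι → ℝ} {E : ι → Set X} {S : Set X} {x : X} {δ s C r : ℝ}

theorem externalCoveringNumber_mul_le_of_tendsto (h : ∀ j, AhlforsRegularBelow δ (t j) C (E j))
    (ht : Tendsto t l (𝓝 s)) (hE : Tendsto (fun j => hausdorffEDist (E j) S) l (𝓝 0))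
    (hC : 0 < C) (hx : x ∈ S) {ε : ℝ≥0} (hε : 0 < ε) (hεr : 5 * ε ≤ r) (hrδ : 2 * r < δ) :
    (externalCoveringNumber (4 * ε) (S ∩ closedBall x r) : ℝ≥0∞) * ENNReal.ofReal (C⁻¹ * ε ^ s) ≤
      ENNReal.ofReal (C * (2 * r) ^ s) := by
  have hε' : (0 : ℝ) < ε := hε
  have hr : 0 < r := by linarith
  refine le_of_tendsto_of_tendsto
    (ENNReal.Tendsto.const_mul (tendsto_ofReal_mul_rpow ht C⁻¹ hε') (.inl ?_))
    (tendsto_ofReal_mul_rpow ht C (by positivity : 0 < 2 * r)) ?_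
  · simpa using mul_pos (inv_pos.2 hC) (Real.rpow_pos_of_pos hε' s)
  · have h_radius : r + 2 * (2 * ε : ℝ≥0) ≤ 2 * r - ε := by push_cast; linarith
    filter_upwards [eventually_exists_isCover_inter_closedBall hE hx (by positivity) h_radius]
      with j ⟨x', hx', h_cover⟩
    simpa only [sub_add_cancel] using
      (h j).externalCoveringNumber_four_mul_mul_le hx' hε (by linarith) (by linarith) h_cover

theorem hausdorffMeasure_inter_closedBall_le_of_tendsto
    (h : ∀ j, AhlforsRegularBelow δ (t j) C (E j)) (ht : Tendsto t l (𝓝 s))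
    (hE : Tendsto (fun j => hausdorffEDist (E j) S) l (𝓝 0)) (hC : 0 < C) (hs : 0 ≤ s)
    (hx : x ∈ S) (hr : 0 < r) (hrδ : 2 * r < δ) :
    μH[s] (S ∩ closedBall x r) ≤ ENNReal.ofReal (C ^ 2 * 16 ^ s * r ^ s) := by
  refine hausdorffMeasure_le_of_frequently_externalCoveringNumber_mul_le hs
    (Eventually.frequently ?_)
  have h_small : 0 < (4 / 5 * r).toNNReal := by simpa using hr
  filter_upwards [Ioo_mem_nhdsGT h_small] with ε ⟨hε, hεr⟩
  rw [Real.lt_toNNReal_iff_coe_lt] at hεr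
  obtain ⟨e, rfl⟩ : ∃ e, ε = 4 * e := ⟨ε / 4, by field_simp⟩
  have he : 0 < e := pos_of_mul_pos_right hε zero_le_four
  push_cast at hεr ⊢
  have h_count := externalCoveringNumber_mul_le_of_tendsto h ht hE hC hx he (by linarith) hrδ
  have h_scale : (2 * (4 * e) : ℝ) ^ s = C * 8 ^ s * (C⁻¹ * e ^ s) := by
    rw [← mul_assoc, Real.mul_rpow (by norm_num : (0 : ℝ) ≤ 2 * 4) e.coe_nonneg]
    norm_num
    field_simp
  have h_bound : C * 8 ^ s * (C * (2 * r) ^ s) = C ^ 2 * 16 ^ s * r ^ s := by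
    rw [Real.mul_rpow zero_le_two hr.le, show (16 : ℝ) = 8 * 2 by norm_num,
      Real.mul_rpow (by norm_num) zero_le_two]
    ring
  rw [h_scale, ENNReal.ofReal_mul (by positivity), mul_left_comm, ← h_bound,
    ENNReal.ofReal_mul (p := C * 8 ^ s) (by positivity)]
  exact mul_le_mul_right h_count _

theorem ofReal_le_sum_of_tendsto (h : ∀ j, AhlforsRegularBelow δ (t j) C (E j))
    (ht : Tendsto t l (𝓝 s)) (hE : Tendsto (fun j => hausdorffEDist (E j) S) l (𝓝 0))
    (hS : IsCompact S) (hx : x ∈ S) (hr : 0 < r) (hrδ : r < δ)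
    {F : Finset ℕ} {c : ℕ → X} {ρ : ℕ → ℝ} (hρ : ∀ n, 0 < ρ n) (hρδ : ∀ n, 2 * ρ n < δ)
    (h_cover : S ∩ closedBall x r ⊆ ⋃ n ∈ F, ball (c n) (ρ n)) :
    ENNReal.ofReal (C⁻¹ * (r / 2) ^ s) ≤ ∑ n ∈ F, ENNReal.ofReal (C * (2 * ρ n) ^ s) := by
  have hU : IsOpen (⋃ n ∈ F, ball (c n) (ρ n)) := isOpen_biUnion fun _ _ => isOpen_ball
  refine le_of_tendsto_of_tendsto (tendsto_ofReal_mul_rpow ht C⁻¹ (half_pos hr))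
    (tendsto_finsetSum F fun n _ => tendsto_ofReal_mul_rpow ht C (mul_pos two_pos (hρ n))) ?_
  filter_upwards [eventually_exists_inter_closedBall_subset hE hx hS hU h_cover
    (half_lt_self hr)] with j ⟨x', hx', h_sub⟩
  exact ((h j) x' hx' (r / 2) (half_pos hr) (by linarith)).1.trans <|
    (h j).measure_le_sum hρ hρδ inter_subset_left <|
      h_sub.trans <| iUnion₂_mono fun _ _ => ball_subset_closedBall

theorem le_hausdorffMeasure_inter_closedBall_of_tendsto
    (h : ∀ j, AhlforsRegularBelow δ (t j) C (E j)) (ht : Tendsto t l (𝓝 s))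
    (hE : Tendsto (fun j => hausdorffEDist (E j) S) l (𝓝 0)) (hC : 0 < C) (hs : 0 < s)
    (hS : IsCompact S) (hx : x ∈ S) (hr : 0 < r) (hrδ : r < δ) :
    ENNReal.ofReal ((C ^ 2 * 4 ^ s)⁻¹ * r ^ s) ≤ μH[s] (S ∩ closedBall x r) := by
  have : Nonempty X := ⟨x⟩
  refine le_hausdorffMeasure_of_forall_finite_ball_cover (hS.inter_right isClosed_closedBall) hs
    (η := δ / 2) (by linarith) fun F c ρ hρ hρδ h_cover => ?_
  have h_sum := ofReal_le_sum_of_tendsto h ht hE hS hx hr hrδ hρ (fun n => by linarith [hρδ n])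
    h_cover
  have h_scale : C⁻¹ * (1 / 2) ^ s * (C⁻¹ * (r / 2) ^ s) = (C ^ 2 * 4 ^ s)⁻¹ * r ^ s := by
    rw [Real.div_rpow hr.le zero_le_two, Real.div_rpow zero_le_one zero_le_two, Real.one_rpow,
      show (4 : ℝ) = 2 * 2 by norm_num, Real.mul_rpow zero_le_two zero_le_two]
    field_simp
  have h_term : ∀ n, C⁻¹ * (1 / 2) ^ s * (C * (2 * ρ n) ^ s) = ρ n ^ s := fun n => by
    rw [Real.mul_rpow zero_le_two (hρ n).le, Real.div_rpow zero_le_one zero_le_two, Real.one_rpow]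
    field_simp
  calc ENNReal.ofReal ((C ^ 2 * 4 ^ s)⁻¹ * r ^ s)
      = ENNReal.ofReal (C⁻¹ * (1 / 2) ^ s) * ENNReal.ofReal (C⁻¹ * (r / 2) ^ s) := by
        rw [← h_scale, ENNReal.ofReal_mul (by positivity)]
    _ ≤ ENNReal.ofReal (C⁻¹ * (1 / 2) ^ s) * ∑ n ∈ F, ENNReal.ofReal (C * (2 * ρ n) ^ s) :=
      mul_le_mul_right h_sum _
    _ = ∑ n ∈ F, ENNReal.ofReal (ρ n ^ s) := by
      rw [Finset.mul_sum]
      refine Finset.sum_congr rfl fun n _ => ?_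
      rw [← ENNReal.ofReal_mul (by positivity), h_term]

theorem of_tendsto_hausdorffEDist (h : ∀ j, AhlforsRegularBelow δ (t j) C (E j))
    (ht : Tendsto t l (𝓝 s)) (hE : Tendsto (fun j => hausdorffEDist (E j) S) l (𝓝 0)) (hC : 0 < C)
    (hs : 0 < s) (hS : IsCompact S) : AhlforsRegularBelow (δ / 2) s (C ^ 2 * 16 ^ s) S := by
  intro x hx r hr hrδ
  refine ⟨le_trans ?_ (le_hausdorffMeasure_inter_closedBall_of_tendsto h ht hE hC hs hS hx hr
    (by linarith)), hausdorffMeasure_inter_closedBall_le_of_tendsto h ht hE hC hs.le hx hr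
    (by linarith)⟩
  gcongr
  norm_num

end AhlforsRegularBelow

end HausdorffLimit

section ChangeOfScale

variable {X : Type*} [MetricSpace X] [MeasurableSpace X] [BorelSpace X]
  {E : Set X} {δ s C R C' : ℝ}

namespace AhlforsRegularBelow

theorem measure_le_card_mul (h : AhlforsRegularBelow δ s C E) (hδ : 0 < δ) {F : Finset X}
    (hF : E ⊆ ⋃ c ∈ F, closedBall c (δ / 4)) :
    μH[s] E ≤ ENNReal.ofReal (F.card * C * (δ / 2) ^ s) := by
  have h_sum := h.measure_le_sum (ρ := fun _ => δ / 4) (fun _ => by positivity)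
    (fun _ => by linarith) subset_rfl hF
  rwa [Finset.sum_const, show 2 * (δ / 4) = δ / 2 by ring, ← ENNReal.ofReal_nsmul, nsmul_eq_mul,
    ← mul_assoc] at h_sum

theorem of_finite_cover (h : AhlforsRegularBelow δ s C E) (hδ : 0 < δ) (hC : 0 < C) (hs : 0 ≤ s)
    {F : Finset X} (hF : E ⊆ ⋃ c ∈ F, closedBall c (δ / 4)) (hCC' : C ≤ C')
    (hFC' : F.card * C ≤ C') (hRC' : C * (2 * R / δ) ^ s ≤ C') :
    AhlforsRegularBelow R s C' E := by
  intro x hx r hr hrR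
  have hC' : 0 < C' := hC.trans_le hCC'
  rcases lt_or_ge r δ with hrδ | hδr
  · obtain ⟨h_lower, h_upper⟩ := h x hx r hr hrδ
    refine ⟨le_trans ?_ h_lower, h_upper.trans ?_⟩ <;> gcongr
  · have hR : 0 < R := hr.trans hrR
    have h_lower : C'⁻¹ * r ^ s ≤ C⁻¹ * (δ / 2) ^ s :=
      calc C'⁻¹ * r ^ s ≤ (C * (2 * R / δ) ^ s)⁻¹ * R ^ s := by gcongr
        _ = C⁻¹ * (δ / 2) ^ s := by
          rw [mul_inv, mul_assoc, ← Real.inv_rpow (by positivity),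
            ← Real.mul_rpow (by positivity) hR.le]
          congr 2
          field_simp
    have h_upper : F.card * C * (δ / 2) ^ s ≤ C' * r ^ s := by
      gcongr
      linarith
    exact ⟨(ENNReal.ofReal_le_ofReal h_lower).trans <|
        (h x hx (δ / 2) (half_pos hδ) (half_lt_self hδ)).1.trans <|
          measure_mono <| inter_subset_inter_right E <| closedBall_subset_closedBall (by linarith),
      (measure_mono inter_subset_left).trans <| (h.measure_le_card_mul hδ hF).trans <|
        ENNReal.ofReal_le_ofReal h_upper⟩

theorem exists_const_of_totallyBounded {B : Set X} (hB : TotallyBounded B) (hδ : 0 < δ)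
    (hC : 0 < C) (hs : 0 ≤ s) (R : ℝ) :
    ∃ C', 1 ≤ C' ∧ ∀ E ⊆ B, AhlforsRegularBelow δ s C E → AhlforsRegularBelow R s C' E := by
  obtain ⟨N, hN, hBN⟩ := Metric.totallyBounded_iff.1 hB (δ / 4) (by positivity)
  refine ⟨max 1 (max C (max (hN.toFinset.card * C) (C * (2 * R / δ) ^ s))), le_max_left _ _,
    fun E hE h => h.of_finite_cover hδ hC hs (F := hN.toFinset) ?_ (by simp) (by simp) (by simp)⟩
  simpa only [Finite.mem_toFinset] using
    hE.trans (hBN.trans (iUnion₂_mono fun _ _ => ball_subset_closedBall))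

end AhlforsRegularBelow

end ChangeOfScale

theorem stmt13_general {X : Type*} [MetricSpace X] [MeasurableSpace X] [BorelSpace X] {B : Set X}
    (hB : TotallyBounded B) {C₁ δ₀ s : ℝ} (hC₁ : 0 < C₁) (hδ₀ : 0 < δ₀) (hs : 0 < s) :
    ∃ C : ℝ, 1 ≤ C ∧ ∀ {ι : Type*} {l : Filter ι} [l.NeBot] {t : ι → ℝ} {E : ι → Set X}
      {S : Set X},
      Tendsto t l (𝓝 s) → (∀ j, (E j).Nonempty) → (∀ j, E j ⊆ B) →
      (∀ j, AhlforsRegularBelow δ₀ (t j) C₁ (E j)) → IsCompact S →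
      Tendsto (fun j => hausdorffDist (E j) S) l (𝓝 0) → AhlforsRegularBelow (diam S) s C S := by
  obtain ⟨C, hC, h_scale⟩ := AhlforsRegularBelow.exists_const_of_totallyBounded hB.closure
    (half_pos hδ₀) (by positivity : 0 < C₁ ^ 2 * 16 ^ s) hs.le (diam (closure B))
  refine ⟨C, hC, fun {ι l _ t E S} ht hE_ne hEB h hS hE x hx => ?_⟩
  have hE' := tendsto_hausdorffEDist_of_tendsto_hausdorffDist hE_ne
    (fun j => hB.isBounded.subset (hEB j)) ⟨x, hx⟩ hS.isBounded hE
  have hSB : S ⊆ closure B := subset_closure_of_tendsto_hausdorffEDist hE' hEB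
  have h_local := AhlforsRegularBelow.of_tendsto_hausdorffEDist h ht hE' hC₁ hs hS
  exact (h_scale S hSB h_local).mono_scale (diam_mono hSB hB.closure.isBounded) x hx

end

/-- a Hausdorff limit of uniformly Ahlfors `s_j`-regular compact sets
(with `s_j → s`, uniformly bounded, uniformly non-degenerate) is Ahlfors `s`-regular
with a constant `C = C(d,C₁,s,δ₀)`. -/
theorem stmt13 (d : ℕ) (C₁ δ₀ s : ℝ) (hC₁ : 1 ≤ C₁) (hδ₀ : 0 < δ₀) (hs : 0 < s) :
    ∃ C : ℝ, 1 ≤ C ∧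
      ∀ (sj : ℕ → ℝ) (Sj : ℕ → Set (EuclideanSpace ℝ (Fin (d+1))))
        (S : Set (EuclideanSpace ℝ (Fin (d+1)))),
        (∀ j, 0 < sj j) → (∀ j, sj j ≤ d + 1) → Tendsto sj atTop (nhds s) →
        (∀ j, (Sj j).Nonempty) → (∀ j, IsCompact (Sj j)) →
        (∀ j, Sj j ⊆ closedBall 0 10) →
        (∀ j, δ₀ ≤ diam (Sj j)) →
        (∀ j, AhlforsRegular (sj j) C₁ (Sj j)) →
        IsCompact S →
        Tendsto (fun j => hausdorffDist (Sj j) S) atTop (nhds 0) →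
        ∀ x ∈ S, ∀ r : ℝ, 0 < r → ENNReal.ofReal r < EMetric.diam S →
          ENNReal.ofReal (C⁻¹ * r ^ s) ≤ μH[s] (S ∩ closedBall x r) ∧
          μH[s] (S ∩ closedBall x r) ≤ ENNReal.ofReal (C * r ^ s) := by
  obtain ⟨C, hC, h⟩ := stmt13_general
    (isCompact_closedBall (0 : EuclideanSpace ℝ (Fin (d + 1))) 10).totallyBounded
    (zero_lt_one.trans_le hC₁) hδ₀ hs
  exact ⟨C, hC, fun sj Sj S _ _ hsj h_ne h_cpt h_sub h_diam h_reg hS h_lim =>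
    (ahlforsRegular_iff_ahlforsRegularBelow_diam hS.isBounded).2 <| h hsj h_ne h_sub
      (fun j => ((ahlforsRegular_iff_ahlforsRegularBelow_diam (h_cpt j).isBounded).1
        (h_reg j)).mono_scale (h_diam j)) hS h_lim⟩
end

section
/- Let n ∈ ℕ, M > 0, let U ⊆ ℝ^n be open, let (μ_j) be a sequence of finite Borel measures on ℝ^n converging weakly to a finite Borel measure μ, and let s_j > 0 be a sequence with s_j → s > 0. Suppose that for every j and every closed ball B(x,ρ) ⊆ U with ρ ≥ 1/j one has μ_j(B(x,ρ)) ≤ M·ρ^{s_j}. Then μ(B(x,ρ)) ≤ M·ρ^s for every closed ball B(x,ρ) ⊆ U. -/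
open MeasureTheory Metric Filter
open scoped ENNReal BoundedContinuousFunction

/-!
Choose `r > ρ` with `B(x, r) ⊆ U`. A continuous function that is `1` on `B(x, ρ)` and `0` off
`B(x, r)` gives `ν(B(x, ρ)) ≤ liminf μ_j(B(x, r)) ≤ lim M r ^ s_j = M r ^ s`; the condition
`r ≥ 1/j` is eventually satisfied because `r` is fixed. Then let `r ↓ ρ`.
-/

section

open scoped Topology

theorem eventually_nhdsGT_closedBall_subset {X : Type*} [PseudoMetricSpace X] [ProperSpace X]
    {U : Set X} (hU : IsOpen U) {x : X} {ρ : ℝ} (hsub : closedBall x ρ ⊆ U) :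
    ∀ᶠ r in 𝓝[>] ρ, closedBall x r ⊆ U := by
  have preimage_Iic (r : ℝ) : dist x ⁻¹' Set.Iic r = closedBall x r := by
    ext y
    simp only [Set.mem_preimage, Set.mem_Iic, mem_closedBall']
  have hU_nhds : U ∈ comap (dist x) (𝓝ˢ (Set.Iic ρ)) := by
    refine (isClosedMap_dist x).comap_nhdsSet_le ?_
    rw [preimage_Iic]
    exact hU.mem_nhdsSet.2 hsub
  obtain ⟨R, hρR, hRU⟩ := ((hasBasis_nhdsSet_Iic_Iic ρ).comap (dist x)).mem_iff.1 hU_nhds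
  filter_upwards [Ioc_mem_nhdsGT hρR] with r hr
  exact (closedBall_subset_closedBall hr.2).trans ((preimage_Iic R).symm.subset.trans hRU)

theorem thickening_closedBall_subset_ball {X : Type*} [PseudoMetricSpace X] (x : X) (δ ρ : ℝ) :
    thickening δ (closedBall x ρ) ⊆ ball x (δ + ρ) := by
  intro y hy
  obtain ⟨z, hz, hyz⟩ := mem_thickening_iff.1 hy
  exact (dist_triangle y z x).trans_lt (add_lt_add_of_lt_of_le hyz hz)

theorem lintegral_thickenedIndicator_le_measure_thickening {X : Type*} [PseudoEMetricSpace X]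
    [MeasurableSpace X] [OpensMeasurableSpace X] (μ : Measure X) {δ : ℝ} (hδ : 0 < δ) (E : Set X) :
    ∫⁻ y, thickenedIndicator hδ E y ∂μ ≤ μ (thickening δ E) := by
  rw [← lintegral_indicator_one isOpen_thickening.measurableSet]
  refine lintegral_mono fun y ↦ ?_
  by_cases hy : y ∈ thickening δ E
  · simpa only [Set.indicator_of_mem hy, Pi.one_apply, ENNReal.coe_le_one_iff] using
      thickenedIndicator_le_one hδ E y
  · simp only [thickenedIndicator_zero hδ E hy, ENNReal.coe_zero, zero_le]

variable {X ι : Type*} [MeasurableSpace X] {l : Filter ι}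

theorem measure_le_liminf_measure_thickening [PseudoEMetricSpace X] [OpensMeasurableSpace X]
    {μ : ι → FiniteMeasure X} {ν : FiniteMeasure X} (hμ : Tendsto μ l (𝓝 ν))
    {E : Set X} (hE : MeasurableSet E) {δ : ℝ} (hδ : 0 < δ) :
    (ν : Measure X) E ≤ liminf (fun j ↦ (μ j : Measure X) (thickening δ E)) l := by
  rcases l.eq_or_neBot with rfl | _
  · simp only [liminf_bot, le_top]
  calc (ν : Measure X) E
      ≤ ∫⁻ y, thickenedIndicator hδ E y ∂(ν : Measure X) :=
        measure_le_lintegral_thickenedIndicator _ hE hδ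
    _ = liminf (fun j ↦ ∫⁻ y, thickenedIndicator hδ E y ∂(μ j : Measure X)) l :=
        (FiniteMeasure.tendsto_iff_forall_lintegral_tendsto.1 hμ _).liminf_eq.symm
    _ ≤ liminf (fun j ↦ (μ j : Measure X) (thickening δ E)) l :=
        liminf_le_liminf <| .of_forall fun j ↦
          lintegral_thickenedIndicator_le_measure_thickening _ hδ E

theorem measure_closedBall_le_liminf_measure_closedBall [PseudoMetricSpace X]
    [OpensMeasurableSpace X] {μ : ι → FiniteMeasure X} {ν : FiniteMeasure X}
    (hμ : Tendsto μ l (𝓝 ν)) (x : X) {ρ r : ℝ} (hρr : ρ < r) :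
    (ν : Measure X) (closedBall x ρ) ≤ liminf (fun j ↦ (μ j : Measure X) (closedBall x r)) l := by
  have hsub : thickening (r - ρ) (closedBall x ρ) ⊆ closedBall x r := by
    simpa only [sub_add_cancel] using
      (thickening_closedBall_subset_ball x (r - ρ) ρ).trans ball_subset_closedBall
  exact (measure_le_liminf_measure_thickening hμ measurableSet_closedBall (sub_pos.2 hρr)).trans
    (liminf_le_liminf <| .of_forall fun j ↦ measure_mono hsub)

theorem measure_closedBall_le_of_tendsto_gauge [PseudoMetricSpace X] [OpensMeasurableSpace X]
    [l.NeBot] {μ : ι → FiniteMeasure X} {ν : FiniteMeasure X} (hμ : Tendsto μ l (𝓝 ν))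
    {g : ι → ℝ → ℝ≥0∞} {h : ℝ → ℝ≥0∞} {x : X} {ρ : ℝ}
    (hgauge : ∀ᶠ r in 𝓝[>] ρ, Tendsto (g · r) l (𝓝 (h r)))
    (hcont : ContinuousWithinAt h (Set.Ioi ρ) ρ)
    (hbound : ∀ᶠ r in 𝓝[>] ρ, ∀ᶠ j in l, (μ j : Measure X) (closedBall x r) ≤ g j r) :
    (ν : Measure X) (closedBall x ρ) ≤ h ρ := by
  refine ge_of_tendsto hcont ?_
  filter_upwards [hgauge, hbound, self_mem_nhdsWithin] with r hgr hr hρr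
  calc (ν : Measure X) (closedBall x ρ)
      ≤ liminf (fun j ↦ (μ j : Measure X) (closedBall x r)) l :=
        measure_closedBall_le_liminf_measure_closedBall hμ x hρr
    _ ≤ liminf (g · r) l := liminf_le_liminf hr
    _ = h r := hgr.liminf_eq

theorem stmt14_general [PseudoMetricSpace X] [ProperSpace X] [OpensMeasurableSpace X] [l.NeBot]
    {μ : ι → FiniteMeasure X} {ν : FiniteMeasure X} (hμ : Tendsto μ l (𝓝 ν))
    {U : Set X} (hU : IsOpen U) {M s : ℝ} {δ σ : ι → ℝ}
    (hδ : Tendsto δ l (𝓝 0)) (hσ : Tendsto σ l (𝓝 s))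
    (hfrost : ∀ j x r, δ j ≤ r → closedBall x r ⊆ U →
      (μ j : Measure X) (closedBall x r) ≤ ENNReal.ofReal (M * r ^ σ j))
    {x : X} {ρ : ℝ} (hρ : 0 < ρ) (hsub : closedBall x ρ ⊆ U) :
    (ν : Measure X) (closedBall x ρ) ≤ ENNReal.ofReal (M * ρ ^ s) := by
  have hpos : ∀ᶠ r in 𝓝[>] ρ, 0 < r := by
    filter_upwards [self_mem_nhdsWithin] with r hr using hρ.trans hr
  refine measure_closedBall_le_of_tendsto_gauge hμ (g := fun j r ↦ ENNReal.ofReal (M * r ^ σ j))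
    (h := fun r ↦ ENNReal.ofReal (M * r ^ s)) ?gauge ?continuity ?bound
  case gauge =>
    filter_upwards [hpos] with r hr
    exact ENNReal.tendsto_ofReal ((tendsto_const_nhds.rpow hσ (.inl hr.ne')).const_mul M)
  case continuity =>
    have hpow : ContinuousAt (fun r : ℝ ↦ M * r ^ s) ρ :=
      (Real.continuousAt_rpow_const ρ s (.inl hρ.ne')).const_mul M
    exact (ENNReal.continuous_ofReal.continuousAt.comp hpow).continuousWithinAt
  case bound =>
    filter_upwards [hpos, eventually_nhdsGT_closedBall_subset hU hsub] with r hr hrU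
    filter_upwards [hδ.eventually_le_const hr] with j hj using hfrost j x r hj hrU

end

/-- uniform Frostman-type upper bounds at scales `ρ ≥ 1/j` (with
exponents `s_j → s`) pass to the weak limit: the limit measure satisfies
`μ(B(x,ρ)) ≤ M ρ^s` for every closed ball `B(x,ρ) ⊆ U`. -/
theorem stmt14 (n : ℕ) (M : ℝ) (hM : 0 < M)
    (U : Set (EuclideanSpace ℝ (Fin n))) (hU : IsOpen U)
    (μ : ℕ → Measure (EuclideanSpace ℝ (Fin n)))
    (ν : Measure (EuclideanSpace ℝ (Fin n)))
    [∀ j, IsFiniteMeasure (μ j)] [IsFiniteMeasure ν]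
    (hweak : ∀ f : EuclideanSpace ℝ (Fin n) →ᵇ ℝ,
      Tendsto (fun j => ∫ x, f x ∂(μ j)) atTop (nhds (∫ x, f x ∂ν)))
    (s : ℝ) (hs : 0 < s) (sj : ℕ → ℝ) (hsj : ∀ j, 0 < sj j)
    (hsjs : Tendsto sj atTop (nhds s))
    (hfrost : ∀ (j : ℕ) (x : EuclideanSpace ℝ (Fin n)) (ρ : ℝ),
      (1 : ℝ) / (j + 1) ≤ ρ → closedBall x ρ ⊆ U →
      μ j (closedBall x ρ) ≤ ENNReal.ofReal (M * ρ ^ sj j)) :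
    ∀ (x : EuclideanSpace ℝ (Fin n)) (ρ : ℝ), 0 < ρ → closedBall x ρ ⊆ U →
      ν (closedBall x ρ) ≤ ENNReal.ofReal (M * ρ ^ s) := by
  exact fun x ρ ↦ stmt14_general (μ := fun j ↦ ⟨μ j, inferInstance⟩) (ν := ⟨ν, inferInstance⟩)
    (FiniteMeasure.tendsto_iff_forall_integral_tendsto.2 hweak) hU
    tendsto_one_div_add_atTop_nhds_zero_nat hsjs hfrost
end

section
/- Let X be a measurable space, μ a finite measure on X with 0 < μ(X) ≤ Λ, f : X → [0,1] a measurable function, K ≥ 1, and let B_1, …, B_N ⊆ X be measurable sets with points c_j ∈ B_j such that f(x) ≤ K·f(c_j) for every x ∈ B_j and every j ∈ {1,…,N}. Let E ⊆ ⋃_{j=1}^N B_j be measurable and suppose ∫_E f dμ ≥ A for some A > 0. Then there exists j ∈ {1,…,N} such that μ(B_j) ≥ A/(2N) and f(c_j) ≥ A/(2KNΛ). -/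
/-!
Split `E` along the cover. As `f ≥ 0`, the integrals of `f` over the pieces `E ∩ B j` add up to at
least `A`, so one of them is at least `A / N`. On that piece `f ≤ 1` turns this into a lower bound
for `μ (B j)`, while `f ≤ K * f (c j)` and `μ (B j) ≤ Λ` turn it into one for `f (c j)`.
-/

open MeasureTheory Filter
open scoped ENNReal

section OrderedField

variable {𝕜 : Type*} [Field 𝕜] [LinearOrder 𝕜] [IsStrictOrderedRing 𝕜]

theorem exists_div_card_le_of_le_sum {ι : Type*} [Fintype ι] {g : ι → 𝕜} {a : 𝕜} (ha : 0 < a)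
    (h : a ≤ ∑ i, g i) :
    ∃ i, a / Fintype.card ι ≤ g i := by
  have hne : (Finset.univ : Finset ι).Nonempty :=
    Finset.nonempty_of_sum_ne_zero (ha.trans_le h).ne'
  have hcard : (Fintype.card ι : 𝕜) ≠ 0 :=
    Nat.cast_ne_zero.2 (Finset.card_pos.2 hne).ne'
  have hsum : ∑ _i : ι, a / Fintype.card ι ≤ ∑ i, g i := by
    rwa [Finset.sum_const, Finset.card_univ, nsmul_eq_mul, mul_div_cancel₀ _ hcard]
  simpa only [Finset.mem_univ, true_and] using Finset.exists_le_of_sum_le hne hsum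

theorem div_mul_le_of_le_mul_mul_of_le {a k l m y : 𝕜} (ha : 0 < a) (hy : 0 ≤ y) (hm : 0 ≤ m)
    (hml : m ≤ l) (h : a ≤ k * y * m) : a / (k * l) ≤ y := by
  have hky : 0 < k * y := pos_of_mul_pos_left (ha.trans_le h) hm
  have hk : 0 < k := pos_of_mul_pos_left hky hy
  have hl : 0 < l := (pos_of_mul_pos_right (ha.trans_le h) hky.le).trans_le hml
  rw [div_le_iff₀ (mul_pos hk hl)]
  calc a ≤ k * y * m := h
    _ ≤ k * y * l := mul_le_mul_of_nonneg_left hml hky.le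
    _ = y * (k * l) := by ring

end OrderedField

section SetIntegral

variable {X : Type*} [MeasurableSpace X] {μ : Measure X} {f : X → ℝ}

theorem setIntegral_iUnion_le_sum {ι : Type*} [Fintype ι] {s : ι → Set X}
    (hf : ∀ i, IntegrableOn f (s i) μ) (hf0 : ∀ i, 0 ≤ᵐ[μ.restrict (s i)] f) :
    ∫ x in ⋃ i, s i, f x ∂μ ≤ ∑ i, ∫ x in s i, f x ∂μ := by
  have hf_sum : Integrable f (Measure.sum fun i ↦ μ.restrict (s i)) := by
    rw [Measure.sum_fintype]
    exact integrable_finsetSum_measure.2 fun i _ ↦ hf i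
  calc ∫ x in ⋃ i, s i, f x ∂μ
      ≤ ∫ x, f x ∂Measure.sum fun i ↦ μ.restrict (s i) :=
        integral_mono_measure Measure.restrict_iUnion_le (Measure.ae_sum_iff.2 hf0) hf_sum
    _ = ∑ i, ∫ x in s i, f x ∂μ := by
        rw [Measure.sum_fintype, integral_finsetSum_measure fun i _ ↦ hf i]

theorem setIntegral_le_mul_measureReal {s : Set X} {C : ℝ} (hs : μ s < ∞)
    (hf0 : ∀ x ∈ s, 0 ≤ f x) (hfC : ∀ x ∈ s, f x ≤ C) :
    ∫ x in s, f x ∂μ ≤ C * μ.real s :=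
  (Real.le_norm_self _).trans <| norm_setIntegral_le_of_norm_le_const hs fun x hx ↦ by
    rw [Real.norm_of_nonneg (hf0 x hx)]
    exact hfC x hx

theorem exists_div_card_le_setIntegral_inter {ι : Type*} [Fintype ι] {E : Set X} {B : ι → Set X}
    (hf : IntegrableOn f E μ) (hf0 : 0 ≤ᵐ[μ.restrict E] f) (hE : E ⊆ ⋃ i, B i)
    {A : ℝ} (hA : 0 < A) (hint : A ≤ ∫ x in E, f x ∂μ) :
    ∃ i, A / Fintype.card ι ≤ ∫ x in E ∩ B i, f x ∂μ := by
  have hcover : ⋃ i, E ∩ B i = E := by rw [← Set.inter_iUnion, Set.inter_eq_left.2 hE]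
  refine exists_div_card_le_of_le_sum hA (hint.trans ?_)
  calc ∫ x in E, f x ∂μ = ∫ x in ⋃ i, E ∩ B i, f x ∂μ := by rw [hcover]
    _ ≤ ∑ i, ∫ x in E ∩ B i, f x ∂μ :=
        setIntegral_iUnion_le_sum (fun i ↦ hf.mono_set Set.inter_subset_left)
          fun i ↦ ae_restrict_of_ae_restrict_of_subset Set.inter_subset_left hf0

end SetIntegral

theorem stmt15_general {X ι : Type*} [MeasurableSpace X] [Fintype ι] {μ : Measure X} {f : X → ℝ}
    {E : Set X} {B : ι → Set X} {c : ι → X} {A K Λ : ℝ} (hμΛ : ∀ j, μ (B j) ≤ ENNReal.ofReal Λ)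
    (hf : IntegrableOn f E μ) (hf0 : ∀ x, 0 ≤ f x) (hf1 : ∀ x ∈ E, f x ≤ 1)
    (hcomp : ∀ j, ∀ x ∈ E ∩ B j, f x ≤ K * f (c j)) (hE : E ⊆ ⋃ j, B j)
    (hA : 0 < A) (hint : A ≤ ∫ x in E, f x ∂μ) :
    ∃ j, A / Fintype.card ι ≤ μ.real (B j) ∧ A / (K * Fintype.card ι * Λ) ≤ f (c j) := by
  obtain ⟨j, hj⟩ := exists_div_card_le_setIntegral_inter hf (ae_of_all _ hf0) hE hA hint
  have hBfin : μ (B j) < ∞ := (hμΛ j).trans_lt ENNReal.ofReal_lt_top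
  have hbound {C : ℝ} (hC : ∀ x ∈ E ∩ B j, f x ≤ C) :
      A / Fintype.card ι ≤ C * μ.real (E ∩ B j) :=
    hj.trans <| setIntegral_le_mul_measureReal (measure_lt_top_mono Set.inter_subset_right hBfin)
      (fun x _ ↦ hf0 x) hC
  have hmono : μ.real (E ∩ B j) ≤ μ.real (B j) :=
    measureReal_mono Set.inter_subset_right hBfin.ne
  have hmass : A / Fintype.card ι ≤ μ.real (B j) := by
    simpa only [one_mul] using (hbound fun x hx ↦ hf1 x hx.1).trans
      (mul_le_mul_of_nonneg_left hmono zero_le_one)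
  have hcard : (0 : ℝ) < Fintype.card ι := Nat.cast_pos.2 (Fintype.card_pos_iff.2 ⟨j⟩)
  have hpos : 0 < A / Fintype.card ι := div_pos hA hcard
  have hΛ : 0 < Λ := ENNReal.ofReal_pos.1 <|
    (ENNReal.toReal_pos_iff.1 (hpos.trans_le hmass)).1.trans_le (hμΛ j)
  have hBΛ : μ.real (B j) ≤ Λ := ENNReal.toReal_le_of_le_ofReal hΛ.le (hμΛ j)
  have hvalue : A / Fintype.card ι / (K * Λ) ≤ f (c j) :=
    div_mul_le_of_le_mul_mul_of_le hpos (hf0 _) measureReal_nonneg (hmono.trans hBΛ)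
      (hbound (hcomp j))
  refine ⟨j, hmass, ?_⟩
  rwa [div_div, mul_left_comm, ← mul_assoc] at hvalue

/-- a pigeonholing lemma: if `∫_E f dμ ≥ A` with `E ⊆ ⋃_{j=1}^N B_j`,
`0 ≤ f ≤ 1`, and `f(x) ≤ K f(c_j)` on each `B_j`, then some `B_j` satisfies
`μ(B_j) ≥ A/(2N)` and `f(c_j) ≥ A/(2KNΛ)`. -/
theorem stmt15 {X : Type*} [MeasurableSpace X] (μ : Measure X) [IsFiniteMeasure μ]
    (Λ : ℝ) (hμ0 : 0 < μ Set.univ) (hμΛ : μ Set.univ ≤ ENNReal.ofReal Λ)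
    (f : X → ℝ) (hf : Measurable f) (hf0 : ∀ x, 0 ≤ f x) (hf1 : ∀ x, f x ≤ 1)
    (K : ℝ) (hK : 1 ≤ K) (N : ℕ)
    (B : Fin N → Set X) (hB : ∀ j, MeasurableSet (B j))
    (c : Fin N → X) (hc : ∀ j, c j ∈ B j)
    (hcomp : ∀ j, ∀ x ∈ B j, f x ≤ K * f (c j))
    (E : Set X) (hE : MeasurableSet E) (hEsub : E ⊆ ⋃ j, B j)
    (A : ℝ) (hA : 0 < A) (hint : A ≤ ∫ x in E, f x ∂μ) :
    ∃ j : Fin N, A / (2 * N) ≤ (μ (B j)).toReal ∧ A / (2 * K * N * Λ) ≤ f (c j) := by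
  have hfi : Integrable f μ := .of_bound hf.aestronglyMeasurable 1 <|
    ae_of_all _ fun x ↦ (Real.norm_of_nonneg (hf0 x)).trans_le (hf1 x)
  simpa [div_div, mul_assoc, Measure.real] using
    stmt15_general (fun j ↦ (measure_mono (Set.subset_univ (B j))).trans hμΛ) hfi.integrableOn hf0
      (fun x _ ↦ hf1 x) (fun j x hx ↦ hcomp j x hx.2) hEsub (half_pos hA)
      ((half_le_self hA.le).trans hint)
end
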